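/- Let f ∈ ℝ[x₁,…,xₙ] with deg f ≤ 2d. Then ρ_d(f) = max{ −L(f) : L a linear functional on polynomials of degree at most 2d with L(g²) ≥ 0 for all g of degree at most d, and |L(x^α)| ≤ 1 for all |α| ≤ 2d }, and this maximum is attained by some such functional L*. -/

import Mathlib

/-!
The distance `p x` from a point `x` to a cone, measured in a seminorm `N`, is a sublinear function
of `x`, so by Hahn–Banach some linear functional `M ≤ p` satisfies `M x = p x`. Since `p` vanishes
on the cone and is at most `N` everywhere, `L = -M` is nonnegative on the cone, is bounded by `N`,
and has `-L x = p x`. Conversely `-L x ≤ -L (x - g) ≤ N (x - g)` for every such `L` and every `g` in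
the cone. Here the cone consists of the sums of squares and `N` is the `ℓ₁`-norm, for which
`|L| ≤ N` on polynomials of degree at most `2d` amounts to `|L (x^α)| ≤ 1` for `|α| ≤ 2d`.
-/

open MvPolynomial Finset

/-- The ℓ₁-norm of the coefficient vector of a polynomial. -/
noncomputable def l1Norm {n : ℕ} (f : MvPolynomial (Fin n) ℝ) : ℝ :=
  ∑ α ∈ f.support, |f.coeff α|

/-- `IsSOS d g` : `g` is a sum of squares of polynomials of degree at most `d`
(i.e. `g ∈ Σ[x]_d`). -/
def IsSOS {n : ℕ} (d : ℕ) (g : MvPolynomial (Fin n) ℝ) : Prop :=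
  ∃ (k : ℕ) (h : Fin k → MvPolynomial (Fin n) ℝ),
    (∀ i, (h i).totalDegree ≤ d) ∧ g = ∑ i, (h i) ^ 2

/-- `rho d f = inf {‖f - g‖₁ : g ∈ Σ[x]_d}`. -/
noncomputable def rho {n : ℕ} (d : ℕ) (f : MvPolynomial (Fin n) ℝ) : ℝ :=
  sInf {r : ℝ | ∃ g, IsSOS d g ∧ r = l1Norm (f - g)}

section Sublinear

variable {E : Type*} [AddCommGroup E] [Module ℝ E] {p : E → ℝ}

theorem map_zero_of_pos_homogeneous (p_smul : ∀ c : ℝ, 0 < c → ∀ x, p (c • x) = c * p x) :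
    p 0 = 0 := by
  have h := p_smul 2 two_pos 0
  rw [smul_zero] at h
  linarith

theorem mul_le_map_smul_of_sublinear (p_smul : ∀ c : ℝ, 0 < c → ∀ x, p (c • x) = c * p x)
    (p_add : ∀ x y, p (x + y) ≤ p x + p y) (c : ℝ) (x : E) : c * p x ≤ p (c • x) := by
  have p_zero : p 0 = 0 := map_zero_of_pos_homogeneous p_smul
  rcases lt_trichotomy c 0 with hc | rfl | hc
  · have h : 0 ≤ p (c • x) + -c * p x := by
      calc 0 = p (c • x + (-c) • x) := by rw [← add_smul, add_neg_cancel, zero_smul, p_zero]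
        _ ≤ p (c • x) + p ((-c) • x) := p_add _ _
        _ = p (c • x) + -c * p x := by rw [p_smul (-c) (neg_pos.mpr hc)]
    linarith
  · rw [zero_mul, zero_smul, p_zero]
  · exact (p_smul c hc x).ge

theorem exists_linearMap_le_of_sublinear (p_smul : ∀ c : ℝ, 0 < c → ∀ x, p (c • x) = c * p x)
    (p_add : ∀ x y, p (x + y) ≤ p x + p y) (x : E) :
    ∃ M : E →ₗ[ℝ] ℝ, M x = p x ∧ ∀ y, M y ≤ p y := by
  have smul_eq_zero_of_smul_eq_zero (c : ℝ) (hc : c • x = 0) : c • p x = 0 := by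
    rcases smul_eq_zero.mp hc with rfl | rfl
    · exact zero_smul ℝ _
    · rw [map_zero_of_pos_homogeneous p_smul, smul_zero]
  let M₀ : E →ₗ.[ℝ] ℝ := LinearPMap.mkSpanSingleton' x (p x) smul_eq_zero_of_smul_eq_zero
  have M₀_le : ∀ y : M₀.domain, M₀ y ≤ p y := by
    rintro ⟨y, hy⟩
    obtain ⟨c, rfl⟩ := Submodule.mem_span_singleton.mp hy
    calc M₀ ⟨c • x, hy⟩ = c * p x := LinearPMap.mkSpanSingleton'_apply _ _ _ c hy
      _ ≤ p (c • x) := mul_le_map_smul_of_sublinear p_smul p_add c x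
  obtain ⟨M, M_eq, M_le⟩ := exists_extension_of_le_sublinear M₀ p p_smul p_add M₀_le
  have hx : x ∈ M₀.domain := Submodule.mem_span_singleton_self x
  exact ⟨M, (M_eq ⟨x, hx⟩).trans (LinearPMap.mkSpanSingleton'_apply_self _ _ _ hx), M_le⟩

end Sublinear

section ConeDistance

variable {E : Type*} [AddCommGroup E] [Module ℝ E] (N : Seminorm ℝ E) (K : PointedCone ℝ E)

/-- The distance from `x` to the cone `K`, measured in the seminorm `N`. -/
noncomputable def coneDist (x : E) : ℝ :=
  ⨅ g : K, N (x - g)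

variable {N K}

theorem coneDist_le {g : E} (hg : g ∈ K) (x : E) : coneDist N K x ≤ N (x - g) :=
  ciInf_le ⟨0, Set.forall_mem_range.mpr fun _ => apply_nonneg N _⟩ (⟨g, hg⟩ : K)

theorem le_coneDist {x : E} {r : ℝ} (h : ∀ g ∈ K, r ≤ N (x - g)) : r ≤ coneDist N K x :=
  le_ciInf fun g : K => h g g.2

theorem coneDist_le_seminorm (x : E) : coneDist N K x ≤ N x := by
  simpa only [sub_zero] using coneDist_le (N := N) K.zero_mem x

theorem coneDist_nonpos_of_mem {g : E} (hg : g ∈ K) : coneDist N K g ≤ 0 := by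
  simpa only [sub_self, map_zero] using coneDist_le (N := N) hg g

theorem coneDist_add_le (x y : E) :
    coneDist N K (x + y) ≤ coneDist N K x + coneDist N K y :=
  le_ciInf_add_ciInf fun g h : K =>
    calc coneDist N K (x + y) ≤ N (x + y - (g + h)) := coneDist_le (K.add_mem g.2 h.2) _
      _ = N ((x - g) + (y - h)) := by rw [add_sub_add_comm]
      _ ≤ N (x - g) + N (y - h) := map_add_le_add N _ _

theorem coneDist_smul_le {c : ℝ} (hc : 0 ≤ c) (x : E) :
    coneDist N K (c • x) ≤ c * coneDist N K x := by
  unfold coneDist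
  rw [Real.mul_iInf_of_nonneg hc]
  refine le_ciInf fun g => ?_
  calc coneDist N K (c • x) ≤ N (c • x - c • g) := coneDist_le (K.smul_mem hc g.2) _
    _ = c * N (x - g) := by rw [← smul_sub, map_smul_eq_mul, Real.norm_of_nonneg hc]

theorem coneDist_smul (c : ℝ) (hc : 0 < c) (x : E) :
    coneDist N K (c • x) = c * coneDist N K x := by
  refine (coneDist_smul_le hc.le x).antisymm ?_
  rw [← le_inv_mul_iff₀ hc]
  simpa only [inv_smul_smul₀ hc.ne'] using
    coneDist_smul_le (N := N) (K := K) (inv_nonneg.mpr hc.le) (c • x)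

theorem neg_apply_le_coneDist {L : E →ₗ[ℝ] ℝ} {x : E} (L_nonneg : ∀ g ∈ K, 0 ≤ L g)
    (L_bound : ∀ g ∈ K, |L (x - g)| ≤ N (x - g)) : -L x ≤ coneDist N K x :=
  le_coneDist fun g hg =>
    calc -L x ≤ -L (x - g) := by rw [map_sub]; linarith [L_nonneg g hg]
      _ ≤ |L (x - g)| := neg_le_abs _
      _ ≤ N (x - g) := L_bound g hg

variable (N K)

theorem exists_neg_apply_eq_coneDist (x : E) :
    ∃ L : E →ₗ[ℝ] ℝ, (∀ g ∈ K, 0 ≤ L g) ∧ (∀ y, |L y| ≤ N y) ∧ -L x = coneDist N K x := by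
  obtain ⟨M, M_eq, M_le⟩ :=
    exists_linearMap_le_of_sublinear (coneDist_smul (N := N) (K := K)) coneDist_add_le x
  have M_le_seminorm (y : E) : M y ≤ N y := (M_le y).trans (coneDist_le_seminorm y)
  refine ⟨-M, fun g hg => ?_, fun y => ?_, ?_⟩
  · exact neg_nonneg.mpr ((M_le g).trans (coneDist_nonpos_of_mem hg))
  · rw [LinearMap.neg_apply, abs_neg, abs_le']
    exact ⟨M_le_seminorm y, by simpa only [map_neg, map_neg_eq_map] using M_le_seminorm (-y)⟩
  · rw [LinearMap.neg_apply, neg_neg, M_eq]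

end ConeDistance

section Polynomial

variable {n d : ℕ} {f g : MvPolynomial (Fin n) ℝ}

theorem l1Norm_eq_sum_of_support_subset {s : Finset (Fin n →₀ ℕ)} (h : f.support ⊆ s) :
    l1Norm f = ∑ α ∈ s, |f.coeff α| :=
  sum_subset h fun α _ hα => by rw [notMem_support_iff.mp hα, abs_zero]

theorem l1Norm_add_le (f g : MvPolynomial (Fin n) ℝ) : l1Norm (f + g) ≤ l1Norm f + l1Norm g := by
  classical
  rw [l1Norm_eq_sum_of_support_subset (support_add (p := f) (q := g)),
    l1Norm_eq_sum_of_support_subset (f := f) subset_union_left,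
    l1Norm_eq_sum_of_support_subset (f := g) subset_union_right, ← sum_add_distrib]
  exact sum_le_sum fun α _ => (coeff_add α f g).symm ▸ abs_add_le _ _

theorem l1Norm_smul (c : ℝ) (f : MvPolynomial (Fin n) ℝ) : l1Norm (c • f) = ‖c‖ * l1Norm f := by
  rw [l1Norm_eq_sum_of_support_subset (support_smul (a := c) (f := f)), l1Norm, mul_sum]
  simp only [coeff_smul, smul_eq_mul, abs_mul, Real.norm_eq_abs]

theorem l1Norm_monomial (α : Fin n →₀ ℕ) (c : ℝ) : l1Norm (monomial α c) = |c| := by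
  rw [l1Norm_eq_sum_of_support_subset support_monomial_subset, sum_singleton, coeff_monomial,
    if_pos rfl]

/-- The `ℓ₁`-norm of the coefficient vector as a seminorm on the space of all polynomials, so that
`rho d` is a `coneDist`. -/
noncomputable def l1Seminorm (n : ℕ) : Seminorm ℝ (MvPolynomial (Fin n) ℝ) :=
  Seminorm.of l1Norm l1Norm_add_le l1Norm_smul

theorem abs_apply_le_l1Norm {L : MvPolynomial (Fin n) ℝ →ₗ[ℝ] ℝ}
    (h : ∀ α ∈ f.support, |L (monomial α 1)| ≤ 1) : |L f| ≤ l1Norm f := by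
  have apply_monomial (α : Fin n →₀ ℕ) (c : ℝ) : L (monomial α c) = c * L (monomial α 1) := by
    rw [← smul_eq_mul, ← map_smul, smul_monomial, smul_eq_mul, mul_one]
  calc |L f| = |∑ α ∈ f.support, f.coeff α * L (monomial α 1)| := by
        conv_lhs => rw [f.as_sum, map_sum, sum_congr rfl fun α _ => apply_monomial α (f.coeff α)]
    _ ≤ ∑ α ∈ f.support, |f.coeff α * L (monomial α 1)| := abs_sum_le_sum_abs _ _
    _ ≤ l1Norm f := sum_le_sum fun α hα => by
        rw [abs_mul]
        exact mul_le_of_le_one_right (abs_nonneg _) (h α hα)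

theorem IsSOS.zero : IsSOS d (0 : MvPolynomial (Fin n) ℝ) :=
  ⟨0, Fin.elim0, fun i => i.elim0, (Fin.sum_univ_zero _).symm⟩

theorem IsSOS.sq (hg : g.totalDegree ≤ d) : IsSOS d (g ^ 2) :=
  ⟨1, fun _ => g, fun _ => hg, (Fin.sum_univ_one fun _ => g ^ 2).symm⟩

theorem IsSOS.add (hf : IsSOS d f) (hg : IsSOS d g) : IsSOS d (f + g) := by
  obtain ⟨k, a, ha, rfl⟩ := hf
  obtain ⟨l, b, hb, rfl⟩ := hg
  refine ⟨k + l, Fin.append a b, fun i => ?_, ?_⟩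
  · induction i using Fin.addCases with
    | left i => simpa only [Fin.append_left] using ha i
    | right i => simpa only [Fin.append_right] using hb i
  · simp only [Fin.sum_univ_add, Fin.append_left, Fin.append_right]

theorem IsSOS.smul {c : ℝ} (hc : 0 ≤ c) (hf : IsSOS d f) : IsSOS d (c • f) := by
  obtain ⟨k, a, ha, rfl⟩ := hf
  refine ⟨k, fun i => √c • a i, fun i => (totalDegree_smul_le _ _).trans (ha i), ?_⟩
  simp only [smul_sum, smul_pow, Real.sq_sqrt hc]

theorem IsSOS.totalDegree_le (hg : IsSOS d g) : g.totalDegree ≤ 2 * d := by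
  obtain ⟨k, a, ha, rfl⟩ := hg
  exact totalDegree_finsetSum_le fun i _ =>
    (totalDegree_pow _ _).trans (Nat.mul_le_mul_left 2 (ha i))

theorem IsSOS.apply_nonneg {L : MvPolynomial (Fin n) ℝ →ₗ[ℝ] ℝ}
    (hL : ∀ h : MvPolynomial (Fin n) ℝ, h.totalDegree ≤ d → 0 ≤ L (h ^ 2)) (hg : IsSOS d g) :
    0 ≤ L g := by
  obtain ⟨k, a, ha, rfl⟩ := hg
  rw [map_sum]
  exact sum_nonneg fun i _ => hL _ (ha i)

/-- The cone `Σ[x]_d` of sums of squares of polynomials of degree at most `d`, as a cone in the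
space of polynomials of all degrees. -/
def sosCone (n d : ℕ) : PointedCone ℝ (MvPolynomial (Fin n) ℝ) where
  carrier := {g | IsSOS d g}
  zero_mem' := IsSOS.zero
  add_mem' := IsSOS.add
  smul_mem' c _ hg := IsSOS.smul c.2 hg

theorem rho_eq_coneDist (d : ℕ) (f : MvPolynomial (Fin n) ℝ) :
    rho d f = coneDist (l1Seminorm n) (sosCone n d) f := by
  refine congrArg sInf (Set.ext fun r => ?_)
  exact ⟨fun ⟨g, hg, hr⟩ => ⟨⟨g, hg⟩, hr.symm⟩, fun ⟨g, hr⟩ => ⟨g, g.2, hr.symm⟩⟩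

theorem neg_apply_le_rho {L : MvPolynomial (Fin n) ℝ →ₗ[ℝ] ℝ} (hf : f.totalDegree ≤ 2 * d)
    (L_sq : ∀ g : MvPolynomial (Fin n) ℝ, g.totalDegree ≤ d → 0 ≤ L (g ^ 2))
    (L_monomial : ∀ α : Fin n →₀ ℕ, α.degree ≤ 2 * d → |L (monomial α 1)| ≤ 1) :
    -L f ≤ rho d f := by
  rw [rho_eq_coneDist]
  refine neg_apply_le_coneDist (fun g hg => IsSOS.apply_nonneg L_sq hg) fun g hg => ?_
  have hfg : (f - g).totalDegree ≤ 2 * d :=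
    (totalDegree_sub f g).trans (max_le hf (IsSOS.totalDegree_le hg))
  exact abs_apply_le_l1Norm fun α hα => L_monomial α ((le_totalDegree hα).trans hfg)

end Polynomial

/-- Strong duality with attainment: `ρ_d(f)` equals the maximum of `-L(f)` over all
linear functionals `L` with `L(g²) ≥ 0` for all `g` of degree at most `d` and
`|L(x^α)| ≤ 1` for all `|α| ≤ 2d`, and this maximum is attained. -/
theorem rho_eq_max_dual {n d : ℕ} (f : MvPolynomial (Fin n) ℝ)
    (hf : f.totalDegree ≤ 2 * d) :
    ∃ L : MvPolynomial (Fin n) ℝ →ₗ[ℝ] ℝ,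
      (∀ g : MvPolynomial (Fin n) ℝ, g.totalDegree ≤ d → 0 ≤ L (g ^ 2)) ∧
      (∀ α : Fin n →₀ ℕ, α.degree ≤ 2 * d → |L (monomial α 1)| ≤ 1) ∧
      rho d f = -L f ∧
      ∀ L' : MvPolynomial (Fin n) ℝ →ₗ[ℝ] ℝ,
        (∀ g : MvPolynomial (Fin n) ℝ, g.totalDegree ≤ d → 0 ≤ L' (g ^ 2)) →
        (∀ α : Fin n →₀ ℕ, α.degree ≤ 2 * d → |L' (monomial α 1)| ≤ 1) →
        -L' f ≤ -L f := by
  obtain ⟨L, L_nonneg, L_bound, L_eq⟩ :=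
    exists_neg_apply_eq_coneDist (l1Seminorm n) (sosCone n d) f
  rw [← rho_eq_coneDist] at L_eq
  refine ⟨L, fun g hg => L_nonneg _ (IsSOS.sq hg), fun α _ => ?_, L_eq.symm, fun L' hsq hmon => ?_⟩
  · calc |L (monomial α 1)| ≤ l1Norm (monomial α 1) := L_bound _
      _ = 1 := by rw [l1Norm_monomial, abs_one]
  · rw [L_eq]
    exact neg_apply_le_rho hf hsq hmon
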